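/- Let f, τ : ℝ → ℂ be 2π-periodic and C^∞, with τ′(α) ≠ 0 for all α and τ(α) ≠ τ(β) whenever α − β is not an integer multiple of 2π, and let ρ be a filter function. For a discrete function q define L_h(q)_i = (h/π) Σ_{j, (j−i) odd} f(α_j)(τ(α_j) − τ(α_i)) q_j / (conj(τ(α_j)) − conj(τ(α_i)))² and K_{3h}(q)_i = (h/π) Σ_{j, (j−i) odd} q_j [ f(α_j)(τ(α_j) − τ(α_i))/(conj(τ(α_j)) − conj(τ(α_i)))² + (f(α_i) τ′(α_i)/(2 conj(τ′(α_i))²)) cot((α_i − α_j)/2) ], both sums over j ∈ {−N/2+1, …, N/2} with j − i odd. Then for every even N ≥ 2 and every discrete q, L_h(q)_i = −(f(α_i) τ′(α_i)/(2 conj(τ′(α_i))²))(H_h q)_i + K_{3h}(q)_i for all i, and there exists a constant c > 0, depending only on f, τ and ρ and not on N or φ, such that ‖D_h^k(K_{3h}(φ^p))‖_{l²} ≤ c ‖φ‖_{l²} for every discrete φ and every k ∈ {0, 1, 2}. -/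

import Mathlib

open scoped BigOperators
open Finset

noncomputable section

/-- Grid spacing `h = 2π/N`. -/
def hgrid (N : ℤ) : ℝ := 2 * Real.pi / N

/-- Grid points `α_j = j h`. -/
def gridPt (N : ℤ) (j : ℤ) : ℝ := j * hgrid N

/-- Index set `{-N/2+1, …, N/2}`. -/
def idxs (N : ℤ) : Finset ℤ := Finset.Icc (-(N / 2) + 1) (N / 2)

/-- Discrete Fourier coefficient `f̂_k`. -/
def dft (N : ℤ) (f : ℤ → ℂ) (k : ℤ) : ℂ :=
  (N : ℂ)⁻¹ * ∑ j ∈ idxs N, f j * Complex.exp (-(Complex.I * (k : ℂ) * (gridPt N j : ℂ)))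

/-- Reconstruction of a discrete function from Fourier coefficients. -/
def idft (N : ℤ) (c : ℤ → ℂ) (j : ℤ) : ℂ :=
  ∑ k ∈ idxs N, c k * Complex.exp (Complex.I * (k : ℂ) * (gridPt N j : ℂ))

/-- The pseudo-spectral derivative `S_h`. -/
def Sh (N : ℤ) (f : ℤ → ℂ) : ℤ → ℂ :=
  idft N fun k => if k = N / 2 then 0 else Complex.I * (k : ℂ) * dft N f k

/-- The pseudo-spectral antiderivative `S_h⁻¹`. -/
def Shinv (N : ℤ) (f : ℤ → ℂ) : ℤ → ℂ :=
  idft N fun k => if k = 0 then 0 else dft N f k / (Complex.I * (k : ℂ))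

/-- The filtered discrete function `f^p`. -/
def filterP (N : ℤ) (ρ : ℝ → ℝ) (f : ℤ → ℂ) : ℤ → ℂ :=
  idft N fun k => (ρ (gridPt N k) : ℂ) * dft N f k

/-- The filtered derivative `D_h`. -/
def Dh (N : ℤ) (ρ : ℝ → ℝ) (f : ℤ → ℂ) : ℤ → ℂ :=
  idft N fun k => Complex.I * (k : ℂ) * (ρ (gridPt N k) : ℂ) * dft N f k

/-- Discrete `l²` norm. -/
def l2norm (N : ℤ) (f : ℤ → ℂ) : ℝ :=
  Real.sqrt (hgrid N * ∑ j ∈ idxs N, ‖f j‖ ^ 2)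

/-- Discrete Hilbert transform `H_h`. -/
def Hh (N : ℤ) (f : ℤ → ℂ) (i : ℤ) : ℂ :=
  ((hgrid N / Real.pi : ℝ) : ℂ) *
    ∑ j ∈ (idxs N).filter (fun j => Odd (j - i)),
      f j * (Real.cot ((gridPt N i - gridPt N j) / 2) : ℂ)

/-- Discrete inner product `(f,g)_h`. -/
def dip (N : ℤ) (f g : ℤ → ℂ) : ℂ :=
  (hgrid N : ℂ) * ∑ j ∈ idxs N, (starRingEnd ℂ) (f j) * g j

/-- Discrete mean `⟨f⟩_h`. -/
def dmean (N : ℤ) (f : ℤ → ℂ) : ℂ :=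
  (N : ℂ)⁻¹ * ∑ j ∈ idxs N, f j

/-- The discrete function of samples of a periodic function. -/
def samples (N : ℤ) (f : ℝ → ℂ) : ℤ → ℂ := fun j => f (gridPt N j)

/-- Fourier coefficient of a `2π`-periodic function. -/
def fourierCoeffP (f : ℝ → ℂ) (k : ℤ) : ℂ :=
  ((2 * Real.pi)⁻¹ : ℝ) * ∫ α in (-Real.pi)..Real.pi, f α * Complex.exp (-(Complex.I * (k : ℂ) * (α : ℂ)))

/-- Sobolev norm `‖f‖_s`. -/
def sobolevNorm (s : ℕ) (f : ℝ → ℂ) : ℝ :=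
  Real.sqrt (∑' k : ℤ, (1 + (k : ℝ) ^ 2) ^ s * ‖fourierCoeffP f k‖ ^ 2)

/-- A filter (cutoff) function for numerical filtering. -/
structure IsFilter (ρ : ℝ → ℝ) : Prop where
  even : ∀ x, ρ (-x) = ρ x
  nonneg : ∀ x, 0 ≤ ρ x
  smooth : ∃ r : ℕ, 2 < r ∧ ContDiff ℝ r ρ
  zero_at_pi : ρ Real.pi = 0
  zero_at_neg_pi : ρ (-Real.pi) = 0
  deriv_zero_at_pi : deriv ρ Real.pi = 0
  deriv_zero_at_neg_pi : deriv ρ (-Real.pi) = 0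
  one_near_zero : ∃ μ : ℝ, 0 < μ ∧ μ < 1 ∧ ∀ x : ℝ, |x| ≤ μ * Real.pi → ρ x = 1

/-- The singular sum `L_h`. -/
def Lh (N : ℤ) (f τ : ℝ → ℂ) (q : ℤ → ℂ) (i : ℤ) : ℂ :=
  ((hgrid N / Real.pi : ℝ) : ℂ) * ∑ j ∈ (idxs N).filter (fun j => Odd (j - i)),
    f (gridPt N j) * (τ (gridPt N j) - τ (gridPt N i)) * q j /
      ((starRingEnd ℂ) (τ (gridPt N j)) - (starRingEnd ℂ) (τ (gridPt N i))) ^ 2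

/-- The remainder operator `K_{3h}[f,τ]`. -/
def K3h (N : ℤ) (f τ : ℝ → ℂ) (q : ℤ → ℂ) (i : ℤ) : ℂ :=
  ((hgrid N / Real.pi : ℝ) : ℂ) * ∑ j ∈ (idxs N).filter (fun j => Odd (j - i)),
    q j * (f (gridPt N j) * (τ (gridPt N j) - τ (gridPt N i)) /
        ((starRingEnd ℂ) (τ (gridPt N j)) - (starRingEnd ℂ) (τ (gridPt N i))) ^ 2 +
      f (gridPt N i) * deriv τ (gridPt N i) /
          (2 * (starRingEnd ℂ) (deriv τ (gridPt N i)) ^ 2) *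
        (Real.cot ((gridPt N i - gridPt N j) / 2) : ℂ))

/-!
Multiplied by `sin ((α - β) / 2)`, the kernel of `K_{3h}` vanishes at `α - β ∈ 2πℤ`, where the
zeros of the sine are simple; by Hadamard's lemma the kernel therefore extends smoothly through the
diagonal. Translating `i` by `2` preserves the parity of `j - i`, so an `m`-fold difference with
step `2h` of `K_{3h} q` falls on the kernel and has norm `O(h ^ m) ‖q‖`.

On the Fourier side this difference has a symbol of modulus `(2 |sin α_k|) ^ m`. As `ρ` is Lipschitz
and vanishes at `±π`, Jordan's inequality gives `|k ρ(α_k)| ≤ C |sin α_k| / h`, and by Parseval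
`D_h ^ m` is bounded by `O(h ^ (-m))` times the `m`-fold difference. The powers of `h` cancel.
-/

section ParametricIntegral

variable {P V : Type*} [NormedAddCommGroup P] [NormedSpace ℝ P] [FiniteDimensional ℝ P]
  [NormedAddCommGroup V] [NormedSpace ℝ V]

theorem hasFDerivAt_intervalIntegral_of_contDiff {F : P × ℝ → V} (hF : ContDiff ℝ 1 F)
    (a b : ℝ) (p : P) :
    HasFDerivAt (fun p => ∫ x in a..b, F (p, x))
      (∫ x in a..b, (fderiv ℝ F (p, x)).comp (ContinuousLinearMap.inl ℝ P ℝ)) p := by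
  have hF' : Continuous fun q : P × ℝ => (fderiv ℝ F q).comp (ContinuousLinearMap.inl ℝ P ℝ) :=
    (hF.continuous_fderiv one_ne_zero).clm_comp continuous_const
  obtain ⟨C, hC⟩ := ((isCompact_closedBall p 1).prod
    (isCompact_uIcc (a := a) (b := b))).exists_bound_of_continuousOn hF'.continuousOn
  refine intervalIntegral.hasFDerivAt_integral_of_dominated_of_fderiv_le
    (F' := fun p x => (fderiv ℝ F (p, x)).comp (ContinuousLinearMap.inl ℝ P ℝ))
    (bound := fun _ => C) (Metric.ball_mem_nhds p one_pos)
    (.of_forall fun q => (hF.continuous.comp (Continuous.prodMk_right q)).aestronglyMeasurable)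
    ((hF.continuous.comp (Continuous.prodMk_right p)).intervalIntegrable _ _)
    (hF'.comp (Continuous.prodMk_right p)).aestronglyMeasurable
    (.of_forall fun x hx q hq =>
      hC (q, x) ⟨Metric.ball_subset_closedBall hq, Set.uIoc_subset_uIcc hx⟩)
    intervalIntegrable_const (.of_forall fun x _ q _ => ?_)
  exact (hF.differentiable one_ne_zero (q, x)).hasFDerivAt.comp q (hasFDerivAt_prodMk_left q x)

theorem contDiff_intervalIntegral_of_contDiff {n : ℕ} {F : P × ℝ → V} (hF : ContDiff ℝ n F)
    (a b : ℝ) : ContDiff ℝ n fun p => ∫ x in a..b, F (p, x) := by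
  induction n generalizing F with
  | zero =>
    exact contDiff_zero.2
      (intervalIntegral.continuous_parametric_intervalIntegral_of_continuous'
        (f := fun p x => F (p, x)) hF.continuous a b)
  | succ n ih =>
    push_cast at hF ⊢
    have hF1 : ContDiff ℝ 1 F := hF.of_le (by simp)
    have hderiv := hasFDerivAt_intervalIntegral_of_contDiff hF1 a b
    refine contDiff_succ_iff_fderiv_apply.2
      ⟨fun p => (hderiv p).differentiableAt, by simp, fun y => ?_⟩
    have hint (p : P) : IntervalIntegrable
        (fun x => (fderiv ℝ F (p, x)).comp (ContinuousLinearMap.inl ℝ P ℝ)) MeasureTheory.volume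
        a b :=
      (((hF1.continuous_fderiv one_ne_zero).comp (Continuous.prodMk_right p)).clm_comp
        continuous_const).intervalIntegrable _ _
    have hderiv_apply : (fun p => fderiv ℝ (fun p => ∫ x in a..b, F (p, x)) p y) =
        fun p => ∫ x in a..b, fderiv ℝ F (p, x) (y, 0) := by
      funext p
      rw [(hderiv p).fderiv, ContinuousLinearMap.intervalIntegral_apply (hint p)]
      simp
    rw [hderiv_apply]
    exact ih ((hF.fderiv_right le_rfl).clm_apply contDiff_const)

end ParametricIntegral

section SimpleZeros

variable {P V : Type*} [NormedAddCommGroup V] [NormedSpace ℝ V]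

/-- The quotient of `F : ℝ × P → V` by a function `s` of the first variable, extended to the
zeros of `s` by the rule of l'Hôpital. -/
def simpleZeroQuotient (s : ℝ → ℝ) (F : ℝ × P → V) (q : ℝ × P) : V :=
  if s q.1 = 0 then (deriv s q.1)⁻¹ • deriv (fun t => F (t, q.2)) q.1 else (s q.1)⁻¹ • F q

theorem smul_simpleZeroQuotient {s : ℝ → ℝ} {F : ℝ × P → V} {q : ℝ × P}
    (hF0 : s q.1 = 0 → F q = 0) : s q.1 • simpleZeroQuotient s F q = F q := by
  by_cases hq : s q.1 = 0
  · rw [hq, zero_smul, hF0 hq]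
  · rw [simpleZeroQuotient, if_neg hq, smul_inv_smul₀ hq]

variable [NormedAddCommGroup P] [NormedSpace ℝ P]

theorem hasDerivAt_comp_prodMk_left {F : ℝ × P → V} {t : ℝ} {p : P}
    (hF : DifferentiableAt ℝ F (t, p)) :
    HasDerivAt (fun x => F (x, p)) (fderiv ℝ F (t, p) (1, 0)) t :=
  hF.hasFDerivAt.comp_hasDerivAt t ((hasDerivAt_id t).prodMk (hasDerivAt_const t p))

theorem contDiff_deriv_left {n : ℕ} {F : ℝ × P → V} (hF : ContDiff ℝ (n + 1 : ℕ) F) :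
    ContDiff ℝ n fun q : ℝ × P => deriv (fun t => F (t, q.2)) q.1 := by
  have hderiv (q : ℝ × P) : deriv (fun t => F (t, q.2)) q.1 = fderiv ℝ F q (1, 0) :=
    (hasDerivAt_comp_prodMk_left (hF.differentiable (by simp) q)).deriv
  simp only [hderiv]
  exact (hF.fderiv_right (by push_cast; rfl)).clm_apply contDiff_const

variable [CompleteSpace V]

theorem dslope_eq_intervalIntegral {g : ℝ → V} (hg : ContDiff ℝ 1 g) (a t : ℝ) :
    dslope g a t = ∫ x in (0 : ℝ)..1, deriv g (a + x * (t - a)) := by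
  rcases eq_or_ne t a with rfl | hta
  · simp
  · have h := intervalIntegral.integral_comp_mul_add (a := 0) (b := 1) (deriv g)
      (sub_ne_zero.2 hta) a
    rw [intervalIntegral.integral_deriv_eq_sub
      (fun x _ => hg.differentiable one_ne_zero x)
      ((hg.continuous_deriv le_rfl).intervalIntegrable _ _)] at h
    rw [dslope_of_ne _ hta, slope_def_module]
    simpa [mul_comm, add_comm] using h.symm

variable [FiniteDimensional ℝ P]

theorem contDiff_dslope_left {n : ℕ} {F : ℝ × P → V} (hF : ContDiff ℝ (n + 1 : ℕ) F) (a : ℝ) :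
    ContDiff ℝ n fun q : ℝ × P => dslope (fun t => F (t, q.2)) a q.1 := by
  have hslice (p : P) : ContDiff ℝ 1 fun t => F (t, p) :=
    (hF.of_le (by simp)).comp (contDiff_id.prodMk contDiff_const)
  simp only [fun q : ℝ × P => dslope_eq_intervalIntegral (hslice q.2) a q.1]
  exact contDiff_intervalIntegral_of_contDiff
    ((contDiff_deriv_left hF).comp (g := fun q : ℝ × P => deriv (fun t => F (t, q.2)) q.1)
      (f := fun y : (ℝ × P) × ℝ => (a + y.2 * (y.1.1 - a), y.1.2)) (by fun_prop)) 0 1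

theorem contDiff_simpleZeroQuotient {n : ℕ} {s : ℝ → ℝ} (hs : ContDiff ℝ (n + 1 : ℕ) s)
    (hs' : ∀ t, s t = 0 → deriv s t ≠ 0) {F : ℝ × P → V} (hF : ContDiff ℝ (n + 1 : ℕ) F)
    (hF0 : ∀ t p, s t = 0 → F (t, p) = 0) : ContDiff ℝ n (simpleZeroQuotient s F) := by
  refine contDiff_iff_contDiffAt.2 fun ⟨a, p⟩ => ?_
  by_cases ha : s a = 0
  · have hslope : ContDiff ℝ n fun q : ℝ × P => dslope s a q.1 :=
      contDiff_dslope_left (F := fun q : ℝ × P => s q.1) (hs.comp contDiff_fst) a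
    have hslope_ne : dslope s a a ≠ 0 := by rw [dslope_same]; exact hs' a ha
    refine ((hslope.contDiffAt.inv hslope_ne).smul
      (contDiff_dslope_left hF a).contDiffAt).congr_of_eventuallyEq ?_
    filter_upwards [hslope.continuous.continuousAt.eventually_ne hslope_ne] with ⟨t, p⟩ ht
    rcases eq_or_ne t a with rfl | hta
    · simp [simpleZeroQuotient, ha]
    · have hst : s t = (t - a) * dslope s a t := by simpa [ha] using (sub_smul_dslope s a t).symm
      have hFt : F (t, p) = (t - a) • dslope (fun t => F (t, p)) a t := by
        simp [hF0 a p ha]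
      have hst0 : s t ≠ 0 := hst ▸ mul_ne_zero (sub_ne_zero.2 hta) ht
      simp only [simpleZeroQuotient, if_neg hst0]
      rw [hFt, smul_smul, hst, mul_inv_rev, inv_mul_cancel_right₀ (sub_ne_zero.2 hta)]
      rfl
  · have hs_fst : ContDiff ℝ n fun q : ℝ × P => s q.1 := (hs.of_le (by simp)).comp contDiff_fst
    refine ((hs_fst.contDiffAt.inv ha).smul
      (hF.of_le (by simp)).contDiffAt).congr_of_eventuallyEq ?_
    filter_upwards [hs_fst.continuous.continuousAt.eventually_ne ha] with q hq
    exact if_neg hq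

end SimpleZeros

section RemainderKernel

theorem sin_half_eq_zero_iff {t : ℝ} :
    Real.sin (t / 2) = 0 ↔ ∃ n : ℤ, t = n * (2 * Real.pi) := by
  rw [Real.sin_eq_zero_iff]
  exact exists_congr fun n => ⟨fun h => by linarith, fun h => by linarith⟩

theorem hasDerivAt_sin_half (t : ℝ) :
    HasDerivAt (fun x => Real.sin (x / 2)) (Real.cos (t / 2) / 2) t := by
  simpa using! ((hasDerivAt_id t).div_const 2).sin

theorem cos_half_sq_eq_one {t : ℝ} (h : Real.sin (t / 2) = 0) : Real.cos (t / 2) ^ 2 = 1 := by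
  simpa [h] using Real.sin_sq_add_cos_sq (t / 2)

theorem cos_half_ne_zero {t : ℝ} (h : Real.sin (t / 2) = 0) : Real.cos (t / 2) ≠ 0 :=
  fun hcos => by simpa [hcos] using cos_half_sq_eq_one h

theorem deriv_sin_half_ne_zero {t : ℝ} (h : Real.sin (t / 2) = 0) :
    deriv (fun x => Real.sin (x / 2)) t ≠ 0 := by
  rw [(hasDerivAt_sin_half t).deriv]
  exact div_ne_zero (cos_half_ne_zero h) two_ne_zero

theorem contDiff_sin_half {n : WithTop ℕ∞} : ContDiff ℝ n fun t : ℝ => Real.sin (t / 2) :=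
  Real.contDiff_sin.comp (contDiff_id.div_const 2)

/-- Divided difference `(g β - g (β + t)) / sin (t / 2)` of a `2π`-periodic function at `(t, β)`,
extended to `t ∈ 2πℤ`. -/
def sinSlope (g : ℝ → ℂ) : ℝ × ℝ → ℂ :=
  simpleZeroQuotient (fun t => Real.sin (t / 2)) fun p => g p.2 - g (p.2 + p.1)

/-- Coefficient of the singular part `-cot ((α - β) / 2)` of the kernel of `L_h`. -/
def cotCoeff (f τ : ℝ → ℂ) (α : ℝ) : ℂ :=
  f α * deriv τ α / (2 * (starRingEnd ℂ) (deriv τ α) ^ 2)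

/-- The kernel of `K_{3h}`. -/
def remainderKernel (f τ : ℝ → ℂ) (α β : ℝ) : ℂ :=
  f β * (τ β - τ α) / ((starRingEnd ℂ) (τ β) - (starRingEnd ℂ) (τ α)) ^ 2 +
    cotCoeff f τ α * (Real.cot ((α - β) / 2) : ℂ)

/-- The product `sin (t / 2) * remainderKernel f τ (β + t) β`, extended to `t ∈ 2πℤ`, at the
point `(t, β)`. -/
def kernelNumerator (f τ : ℝ → ℂ) (p : ℝ × ℝ) : ℂ :=
  f p.2 * sinSlope τ p / (starRingEnd ℂ) (sinSlope τ p) ^ 2 +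
    cotCoeff f τ (p.2 + p.1) * (Real.cos (p.1 / 2) : ℂ)

/-- The extension of `remainderKernel f τ` through the diagonal `α - β ∈ 2πℤ`. -/
def smoothKernel (f τ : ℝ → ℂ) (p : ℝ × ℝ) : ℂ :=
  simpleZeroQuotient (fun t => Real.sin (t / 2)) (kernelNumerator f τ) (p.1 - p.2, p.2)

theorem contDiff_conj {n : WithTop ℕ∞} : ContDiff ℝ n (starRingEnd ℂ) := Complex.conjCLE.contDiff

section SinSlope

variable {g : ℝ → ℂ} (hg : Function.Periodic g (2 * Real.pi))
include hg

theorem periodic_of_sin_half_eq_zero {t : ℝ} (ht : Real.sin (t / 2) = 0) :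
    Function.Periodic g t := by
  obtain ⟨n, rfl⟩ := sin_half_eq_zero_iff.1 ht
  exact hg.int_mul n

theorem sin_half_mul_sinSlope (t β : ℝ) :
    (Real.sin (t / 2) : ℂ) * sinSlope g (t, β) = g β - g (β + t) := by
  rw [← Complex.real_smul]
  exact smul_simpleZeroQuotient (s := fun t => Real.sin (t / 2)) (q := (t, β)) fun ht =>
    sub_eq_zero.2 (periodic_of_sin_half_eq_zero hg ht β).symm

theorem contDiff_sinSlope {n : ℕ} (hg' : ContDiff ℝ (n + 1 : ℕ) g) : ContDiff ℝ n (sinSlope g) :=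
  contDiff_simpleZeroQuotient contDiff_sin_half (fun _ => deriv_sin_half_ne_zero)
    (by fun_prop) fun t β ht => by simp [periodic_of_sin_half_eq_zero hg ht β]

end SinSlope

theorem sinSlope_of_sin_half_eq_zero {g : ℝ → ℂ} {t : ℝ} (ht : Real.sin (t / 2) = 0) (β : ℝ) :
    sinSlope g (t, β) = -(2 * Real.cos (t / 2) * deriv g (β + t)) := by
  have hcos := cos_half_ne_zero ht
  have hinv : (Real.cos (t / 2) / 2)⁻¹ = 2 * Real.cos (t / 2) := by
    field_simp
    exact (cos_half_sq_eq_one ht).symm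
  simp only [sinSlope, simpleZeroQuotient, if_pos ht, (hasDerivAt_sin_half t).deriv, hinv,
    deriv_const_sub, deriv_comp_const_add]
  simp

variable {f τ : ℝ → ℂ} (hfper : Function.Periodic f (2 * Real.pi))
  (hτper : Function.Periodic τ (2 * Real.pi)) (hτ' : ∀ α : ℝ, deriv τ α ≠ 0)
  (hinj : ∀ α β : ℝ, (¬ ∃ n : ℤ, α - β = n * (2 * Real.pi)) → τ α ≠ τ β)

include hτper hτ' hinj in
theorem sinSlope_ne_zero (p : ℝ × ℝ) : sinSlope τ p ≠ 0 := by
  obtain ⟨t, β⟩ := p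
  by_cases ht : Real.sin (t / 2) = 0
  · rw [sinSlope_of_sin_half_eq_zero ht]
    have hcos : (Real.cos (t / 2) : ℂ) ≠ 0 := mod_cast cos_half_ne_zero ht
    exact neg_ne_zero.2 (mul_ne_zero (mul_ne_zero two_ne_zero hcos) (hτ' _))
  · intro h
    have := sin_half_mul_sinSlope hτper t β
    rw [h, mul_zero] at this
    refine hinj (β + t) β ?_ (sub_eq_zero.1 this.symm).symm
    rwa [add_sub_cancel_left, ← sin_half_eq_zero_iff]

include hτ' in
theorem contDiff_cotCoeff {n : ℕ} (hf : ContDiff ℝ n f) (hτ : ContDiff ℝ (n + 1 : ℕ) τ) :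
    ContDiff ℝ n (cotCoeff f τ) := by
  have hd : ContDiff ℝ n (deriv τ) := (contDiff_succ_iff_deriv.1 (by exact_mod_cast hτ)).2.2
  refine (hf.mul hd).mul (ContDiff.inv (contDiff_const.mul ((contDiff_conj.comp hd).pow 2))
    fun α => ?_)
  simp [hτ' α]

include hτper hτ' hinj in
theorem contDiff_kernelNumerator {n : ℕ} (hf : ContDiff ℝ n f) (hτ : ContDiff ℝ (n + 1 : ℕ) τ) :
    ContDiff ℝ n (kernelNumerator f τ) := by
  have hT := contDiff_sinSlope hτper hτ
  have hcos : ContDiff ℝ n fun p : ℝ × ℝ => (Real.cos (p.1 / 2) : ℂ) :=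
    Complex.ofRealCLM.contDiff.comp (Real.contDiff_cos.comp (contDiff_fst.div_const 2))
  refine (((hf.comp contDiff_snd).mul hT).mul
    (ContDiff.inv ((contDiff_conj.comp hT).pow 2) fun p => ?_)).add
    (((contDiff_cotCoeff hτ' hf hτ).comp (contDiff_snd.add contDiff_fst)).mul hcos)
  simpa using sinSlope_ne_zero hτper hτ' hinj p

include hfper hτper in
theorem periodic_remainderKernel_left (β : ℝ) :
    Function.Periodic (fun α => remainderKernel f τ α β) (2 * Real.pi) := fun α => by
  have hderiv : deriv τ (α + 2 * Real.pi) = deriv τ α := by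
    rw [← deriv_comp_add_const, hτper.funext]
  have hhalf : (α + 2 * Real.pi - β) / 2 = (α - β) / 2 + Real.pi := by ring
  simp only [remainderKernel, cotCoeff, hfper α, hτper α, hderiv, hhalf,
    Real.cot_eq_cos_div_sin, Real.cos_add_pi, Real.sin_add_pi, neg_div_neg_eq]

include hfper in
theorem kernelNumerator_of_sin_half_eq_zero (t β : ℝ) (ht : Real.sin (t / 2) = 0) :
    kernelNumerator f τ (t, β) = 0 := by
  have hcos : (Real.cos (t / 2) : ℂ) ^ 2 = 1 := by exact_mod_cast cos_half_sq_eq_one ht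
  simp only [kernelNumerator, cotCoeff, sinSlope_of_sin_half_eq_zero ht, map_neg, map_mul,
    Complex.conj_ofReal, map_ofNat, periodic_of_sin_half_eq_zero hfper ht β]
  -- Since `cos² = 1`, the two terms are opposite to each other.
  rw [neg_sq, mul_pow, mul_pow, hcos]
  ring

include hfper hτper hτ' hinj in
theorem contDiff_smoothKernel {n : ℕ} (hf : ContDiff ℝ (n + 1 : ℕ) f)
    (hτ : ContDiff ℝ (n + 2 : ℕ) τ) : ContDiff ℝ n (smoothKernel f τ) :=
  (contDiff_simpleZeroQuotient contDiff_sin_half (fun _ => deriv_sin_half_ne_zero)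
    (contDiff_kernelNumerator hτper hτ' hinj hf hτ)
    (kernelNumerator_of_sin_half_eq_zero hfper)).comp
    ((contDiff_fst.sub contDiff_snd).prodMk contDiff_snd)

include hτper in
theorem smoothKernel_eq_remainderKernel {α β : ℝ} (h : Real.sin ((α - β) / 2) ≠ 0) :
    smoothKernel f τ (α, β) = remainderKernel f τ α β := by
  have hs : (Real.sin ((α - β) / 2) : ℂ) ≠ 0 := by exact_mod_cast h
  have hτ := sin_half_mul_sinSlope hτper (α - β) β
  rw [add_sub_cancel] at hτ
  simp only [smoothKernel, simpleZeroQuotient, if_neg h, kernelNumerator, add_sub_cancel,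
    remainderKernel, ← map_sub, ← hτ, map_mul, Complex.conj_ofReal, Real.cot_eq_cos_div_sin,
    Complex.real_smul, Complex.ofReal_inv, Complex.ofReal_div]
  field_simp

end RemainderKernel

section ForwardDifference

variable {E V : Type*} [NormedAddCommGroup E] [NormedSpace ℝ E]
  [NormedAddCommGroup V] [NormedSpace ℝ V]

theorem iteratedFDeriv_fwdDiff {m : ℕ} {Q : E → V} (hQ : ContDiff ℝ m Q) (v y : E) :
    iteratedFDeriv ℝ m (fwdDiff v Q) y = iteratedFDeriv ℝ m Q (y + v) - iteratedFDeriv ℝ m Q y := by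
  have hshift : ContDiff ℝ m fun y => Q (y + v) := hQ.comp (contDiff_id.add contDiff_const)
  rw [← iteratedFDeriv_comp_add_right]
  exact iteratedFDeriv_sub_apply hshift.contDiffAt hQ.contDiffAt

theorem norm_fwdDiff_iterate_le {m : ℕ} {Q : E → V} {s : Set E} {M : ℝ} {x v : E}
    (hQ : ContDiff ℝ m Q) (hs : Convex ℝ s) (hM : ∀ y ∈ s, ‖iteratedFDeriv ℝ m Q y‖ ≤ M)
    (hx : ∀ i ≤ m, x + i • v ∈ s) : ‖(fwdDiff v)^[m] Q x‖ ≤ ‖v‖ ^ m * M := by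
  induction m generalizing Q s M with
  | zero => simpa using hM x (by simpa using hx 0 le_rfl)
  | succ m ih =>
    have hQm : ContDiff ℝ m Q := hQ.of_le (by simp)
    rw [Function.iterate_succ_apply, pow_succ, mul_assoc]
    refine ih (Q := fwdDiff v Q) (s := s ∩ (· + v) ⁻¹' s)
      ((hQm.comp (contDiff_id.add contDiff_const)).sub hQm)
      (hs.inter (hs.translate_preimage_left v)) (fun y hy => ?_) fun i hi => ⟨hx i (by lia), ?_⟩
    · rw [iteratedFDeriv_fwdDiff hQm]
      have hmvt := hs.norm_image_sub_le_of_norm_fderiv_le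
        (fun z _ => hQ.differentiable_iteratedFDeriv (by exact_mod_cast m.lt_succ_self) z)
        (fun z hz => norm_fderiv_iteratedFDeriv.trans_le (hM z hz)) hy.1 hy.2
      rwa [add_sub_cancel_left, mul_comm] at hmvt
    · have := hx (i + 1) (by lia)
      rwa [succ_nsmul, ← add_assoc] at this

end ForwardDifference

section Grid

theorem gridPt_add (N i j : ℤ) : gridPt N (i + j) = gridPt N i + gridPt N j := by
  simp only [gridPt]
  push_cast
  ring

theorem gridPt_sub (N i j : ℤ) : gridPt N (i - j) = gridPt N i - gridPt N j := by
  simp only [gridPt]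
  push_cast
  ring

theorem sum_idxs {M : Type*} [AddCommMonoid M] {N : ℤ} (he : Even N) (g : ℤ → M) :
    ∑ j ∈ idxs N, g j = ∑ n ∈ range N.toNat, g (-(N / 2) + 1 + n) := by
  have hlen : N / 2 + 1 - (-(N / 2) + 1) = N := by grind
  simp only [idxs, Int.Icc_eq_finset_map, hlen, Finset.sum_map]
  rfl

theorem eq_of_periodic_of_eqOn_idxs {V : Type*} [AddGroup V] {N : ℤ} (hN : 0 < N) (he : Even N)
    {u v : ℤ → V} (hu : Function.Periodic u N) (hv : Function.Periodic v N)
    (h : ∀ j ∈ idxs N, u j = v j) : u = v := by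
  funext i
  obtain ⟨j, hj, hij⟩ := (hu.sub hv).exists_mem_Ioc hN i (-(N / 2))
  have hj' : j ∈ idxs N := by
    rw [Set.mem_Ioc] at hj
    rw [idxs, Finset.mem_Icc]
    grind
  rw [Pi.sub_apply, Pi.sub_apply, h j hj', sub_self] at hij
  exact sub_eq_zero.1 hij

theorem dvd_sub_iff_eq_of_mem_idxs {N : ℤ} (he : Even N) {k l : ℤ} (hk : k ∈ idxs N)
    (hl : l ∈ idxs N) : N ∣ k - l ↔ k = l := by
  refine ⟨fun h => ?_, fun h => by simp [h]⟩
  rw [idxs, Finset.mem_Icc] at hk hl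
  have := Int.eq_zero_of_abs_lt_dvd h (by grind)
  lia

variable {N : ℤ} (hN : 0 < N)
include hN

theorem hgrid_pos : 0 < hgrid N :=
  div_pos Real.two_pi_pos (Int.cast_pos.2 hN)

theorem hgrid_mul_self : hgrid N * N = 2 * Real.pi :=
  div_mul_cancel₀ _ (Int.cast_ne_zero.2 hN.ne')

theorem gridPt_self : gridPt N N = 2 * Real.pi := by
  rw [gridPt, mul_comm, hgrid_mul_self hN]

theorem abs_gridPt_le {k : ℤ} (hk : k ∈ idxs N) : |gridPt N k| ≤ Real.pi := by
  rw [idxs, Finset.mem_Icc] at hk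
  have hk_abs : |k| ≤ N / 2 := abs_le.2 ⟨by lia, hk.2⟩
  have hkN : 2 * |(k : ℝ)| ≤ N := by exact_mod_cast (by lia : 2 * |k| ≤ N)
  rw [gridPt, abs_mul, abs_of_pos (hgrid_pos hN)]
  nlinarith [hgrid_pos hN, hgrid_mul_self hN]

theorem card_idxs (he : Even N) : ((idxs N).card : ℤ) = N := by
  have := sum_idxs he fun _ => 1
  rw [← Finset.card_eq_sum_ones, ← Finset.card_eq_sum_ones, Finset.card_range] at this
  lia

theorem sin_half_gridPt_sub_ne_zero (he : Even N) {i j : ℤ} (hij : Odd (j - i)) :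
    Real.sin ((gridPt N i - gridPt N j) / 2) ≠ 0 := by
  rw [Ne, sin_half_eq_zero_iff]
  rintro ⟨n, hn⟩
  rw [← gridPt_sub, ← hgrid_mul_self hN, gridPt, mul_comm (hgrid N), ← mul_assoc] at hn
  have hmul : i - j = n * N := by exact_mod_cast mul_right_cancel₀ (hgrid_pos hN).ne' hn
  have heven : Even (i - j) := hmul ▸ he.mul_left n
  grind

end Grid

section DiscreteFourier

/-- The additive character `n ↦ exp (2πi n / N)` of `ℤ`. -/
def gridChar (N : ℤ) : AddChar ℤ ℂ where
  toFun n := Complex.exp (Complex.I * (gridPt N n : ℂ))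
  map_zero_eq_one' := by simp [gridPt]
  map_add_eq_mul' m n := by rw [gridPt_add, ← Complex.exp_add]; push_cast; ring_nf

theorem exp_mul_gridPt (N k j : ℤ) :
    Complex.exp (Complex.I * (k : ℂ) * (gridPt N j : ℂ)) = gridChar N (k * j) := by
  simp only [gridChar, gridPt, AddChar.coe_mk]
  push_cast
  ring_nf

theorem exp_neg_mul_gridPt (N k j : ℤ) :
    Complex.exp (-(Complex.I * (k : ℂ) * (gridPt N j : ℂ))) = gridChar N (-(k * j)) := by
  rw [Complex.exp_neg, exp_mul_gridPt, AddChar.map_neg_eq_inv]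

theorem conj_gridChar (N n : ℤ) : (starRingEnd ℂ) (gridChar N n) = gridChar N (-n) := by
  simp only [gridChar, gridPt, AddChar.coe_mk, ← Complex.exp_conj]
  simp

theorem norm_gridChar_mul_two_sub_one (N k : ℤ) :
    ‖gridChar N (k * 2) - 1‖ = 2 * |Real.sin (gridPt N k)| := by
  have hhalf : gridPt N (k * 2) / 2 = gridPt N k := by
    rw [mul_two, gridPt_add]
    ring
  refine (Complex.norm_exp_I_mul_ofReal_sub_one _).trans ?_
  rw [hhalf, norm_mul, Real.norm_ofNat, Real.norm_eq_abs]

theorem fwdDiff_iterate_idft (N d : ℤ) (m : ℕ) (c : ℤ → ℂ) :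
    (fwdDiff d)^[m] (idft N c) = idft N fun k => (gridChar N (k * d) - 1) ^ m * c k := by
  induction m generalizing c with
  | zero => simp
  | succ m ih =>
    have hstep : fwdDiff d (idft N c) = idft N fun k => (gridChar N (k * d) - 1) * c k := by
      funext j
      simp only [fwdDiff, idft, exp_mul_gridPt, ← Finset.sum_sub_distrib, mul_add,
        AddChar.map_add_eq_mul]
      exact Finset.sum_congr rfl fun k _ => by ring
    simp only [Function.iterate_succ_apply, hstep, ih, pow_succ, mul_assoc]

variable {N : ℤ} (hN : 0 < N)
include hN

theorem gridChar_eq_one_iff {n : ℤ} : gridChar N n = 1 ↔ N ∣ n := by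
  have hN0 : (N : ℂ) ≠ 0 := Int.cast_ne_zero.2 hN.ne'
  have hpi : (Real.pi : ℂ) ≠ 0 := Complex.ofReal_ne_zero.2 Real.pi_ne_zero
  simp only [gridChar, AddChar.coe_mk, Complex.exp_eq_one_iff, gridPt, hgrid]
  push_cast
  refine exists_congr fun l => ?_
  rw [← Int.cast_inj (α := ℂ)]
  push_cast
  field_simp

theorem periodic_idft (c : ℤ → ℂ) : Function.Periodic (idft N c) N := fun j => by
  simp only [idft, exp_mul_gridPt, mul_add, AddChar.map_add_eq_mul,
    (gridChar_eq_one_iff hN).2 (dvd_mul_left N _), mul_one]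

variable (he : Even N)
include he

theorem sum_gridChar_mul_eq_zero {k : ℤ} (hk : ¬ N ∣ k) :
    ∑ j ∈ idxs N, gridChar N (k * j) = 0 := by
  have hpow (n : ℕ) : gridChar N (k * n) = gridChar N k ^ n := by
    rw [mul_comm, ← AddChar.map_nsmul_eq_pow, nsmul_eq_mul]
  have hone : gridChar N k ^ N.toNat = 1 := by
    rw [← hpow, gridChar_eq_one_iff hN, Int.toNat_of_nonneg hN.le]
    exact dvd_mul_left N k
  have hne : gridChar N k - 1 ≠ 0 := sub_ne_zero.2 fun h => hk ((gridChar_eq_one_iff hN).1 h)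
  have hgeom : ∑ n ∈ range N.toNat, gridChar N k ^ n = 0 := by
    have h := mul_geom_sum (gridChar N k) N.toNat
    rw [hone, sub_self] at h
    exact (mul_eq_zero.1 h).resolve_left hne
  simp only [sum_idxs he, mul_add _ _ (_ : ℤ), AddChar.map_add_eq_mul, hpow, ← Finset.mul_sum,
    hgeom, mul_zero]

theorem inv_mul_sum_gridChar_sub {a b : ℤ} (ha : a ∈ idxs N) (hb : b ∈ idxs N) :
    (N : ℂ)⁻¹ * ∑ j ∈ idxs N, gridChar N ((a - b) * j) = if a = b then 1 else 0 := by
  split_ifs with hab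
  · have hcard : ((idxs N).card : ℂ) = N := by exact_mod_cast card_idxs hN he
    simp [hab, hcard, hN.ne']
  · rw [sum_gridChar_mul_eq_zero hN he (mt (dvd_sub_iff_eq_of_mem_idxs he ha hb).1 hab),
      mul_zero]

theorem dft_idft (c : ℤ → ℂ) {k : ℤ} (hk : k ∈ idxs N) : dft N (idft N c) k = c k := by
  have hswap : dft N (idft N c) k =
      ∑ l ∈ idxs N, c l * ((N : ℂ)⁻¹ * ∑ j ∈ idxs N, gridChar N ((l - k) * j)) := by
    simp only [dft, idft, exp_mul_gridPt, exp_neg_mul_gridPt, Finset.sum_mul, Finset.mul_sum]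
    rw [Finset.sum_comm]
    refine Finset.sum_congr rfl fun l _ => Finset.sum_congr rfl fun j _ => ?_
    rw [sub_mul, sub_eq_add_neg, AddChar.map_add_eq_mul]
    ring
  rw [hswap, Finset.sum_eq_single_of_mem k hk fun l hl hlk => ?_]
  · rw [inv_mul_sum_gridChar_sub hN he hk hk, if_pos rfl, mul_one]
  · rw [inv_mul_sum_gridChar_sub hN he hl hk, if_neg hlk, mul_zero]

theorem idft_dft_apply (v : ℤ → ℂ) {j : ℤ} (hj : j ∈ idxs N) : idft N (dft N v) j = v j := by
  have hswap : idft N (dft N v) j =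
      ∑ l ∈ idxs N, v l * ((N : ℂ)⁻¹ * ∑ k ∈ idxs N, gridChar N ((j - l) * k)) := by
    simp only [dft, idft, exp_mul_gridPt, exp_neg_mul_gridPt, Finset.sum_mul, Finset.mul_sum]
    rw [Finset.sum_comm]
    refine Finset.sum_congr rfl fun l _ => Finset.sum_congr rfl fun k _ => ?_
    rw [mul_comm _ k, mul_sub, sub_eq_add_neg, AddChar.map_add_eq_mul]
    ring
  rw [hswap, Finset.sum_eq_single_of_mem j hj fun l hl hlj => ?_]
  · rw [inv_mul_sum_gridChar_sub hN he hj hj, if_pos rfl, mul_one]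
  · rw [inv_mul_sum_gridChar_sub hN he hj hl, if_neg hlj.symm, mul_zero]

theorem idft_dft {v : ℤ → ℂ} (hv : Function.Periodic v N) : idft N (dft N v) = v :=
  eq_of_periodic_of_eqOn_idxs hN he (periodic_idft hN _) hv fun _ => idft_dft_apply hN he v

theorem dft_fwdDiff_iterate {v : ℤ → ℂ} (hv : Function.Periodic v N) (d : ℤ) (m : ℕ) {k : ℤ}
    (hk : k ∈ idxs N) :
    dft N ((fwdDiff d)^[m] v) k = (gridChar N (k * d) - 1) ^ m * dft N v k := by
  conv_lhs => rw [← idft_dft hN he hv, fwdDiff_iterate_idft]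
  exact dft_idft hN he _ hk

theorem dft_Dh_iterate (ρ : ℝ → ℝ) (v : ℤ → ℂ) (m : ℕ) {k : ℤ} (hk : k ∈ idxs N) :
    dft N ((Dh N ρ)^[m] v) k = (Complex.I * k * ρ (gridPt N k)) ^ m * dft N v k := by
  induction m with
  | zero => simp
  | succ m ih =>
    rw [Function.iterate_succ_apply', Dh, dft_idft hN he _ hk, ih]
    ring

theorem sum_norm_sq_eq_sum_norm_sq_dft (v : ℤ → ℂ) :
    ∑ j ∈ idxs N, ‖v j‖ ^ 2 = N * ∑ k ∈ idxs N, ‖dft N v k‖ ^ 2 := by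
  have hN0 : (N : ℂ) ≠ 0 := Int.cast_ne_zero.2 hN.ne'
  have hpairing : ∑ j ∈ idxs N, idft N (dft N v) j * (starRingEnd ℂ) (v j) =
      N * ∑ k ∈ idxs N, dft N v k * (starRingEnd ℂ) (dft N v k) := by
    simp only [idft, exp_mul_gridPt, Finset.sum_mul]
    rw [Finset.sum_comm, Finset.mul_sum]
    refine Finset.sum_congr rfl fun k _ => ?_
    have hconj : (N : ℂ) * (starRingEnd ℂ) (dft N v k) =
        ∑ j ∈ idxs N, (starRingEnd ℂ) (v j) * gridChar N (k * j) := by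
      simp only [dft, exp_neg_mul_gridPt, map_mul, map_sum, map_inv₀, map_intCast, conj_gridChar,
        neg_neg, mul_inv_cancel_left₀ hN0]
    rw [mul_left_comm, hconj, Finset.mul_sum]
    exact Finset.sum_congr rfl fun j _ => by ring
  rw [Finset.sum_congr rfl fun j hj => by rw [idft_dft_apply hN he v hj]] at hpairing
  simp only [Complex.mul_conj, Complex.normSq_eq_norm_sq] at hpairing
  exact_mod_cast hpairing

theorem l2norm_le_of_norm_dft_le {u v : ℤ → ℂ} {C : ℝ} (hC : 0 ≤ C)
    (h : ∀ k ∈ idxs N, ‖dft N u k‖ ≤ C * ‖dft N v k‖) : l2norm N u ≤ C * l2norm N v := by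
  have hN0 : (0 : ℝ) ≤ N := Int.cast_nonneg hN.le
  have hsum : ∑ j ∈ idxs N, ‖u j‖ ^ 2 ≤ C ^ 2 * ∑ j ∈ idxs N, ‖v j‖ ^ 2 := by
    rw [sum_norm_sq_eq_sum_norm_sq_dft hN he u, sum_norm_sq_eq_sum_norm_sq_dft hN he v,
      mul_left_comm, Finset.mul_sum _ _ (C ^ 2)]
    refine mul_le_mul_of_nonneg_left (Finset.sum_le_sum fun k hk => ?_) hN0
    exact (pow_le_pow_left₀ (norm_nonneg _) (h k hk) 2).trans_eq (mul_pow _ _ _)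
  rw [l2norm, l2norm, ← Real.sqrt_sq hC, ← Real.sqrt_mul (sq_nonneg C), mul_left_comm]
  exact Real.sqrt_le_sqrt (mul_le_mul_of_nonneg_left hsum (hgrid_pos hN).le)

end DiscreteFourier

section FilteredDerivative

theorem abs_mul_pi_sub_abs_le {x : ℝ} (hx : |x| ≤ Real.pi) :
    |x| * (Real.pi - |x|) ≤ Real.pi ^ 2 / 2 * |Real.sin x| := by
  have jordan {y : ℝ} (hy : 0 ≤ y) (hy' : y ≤ Real.pi / 2) :
      Real.pi * y ≤ Real.pi ^ 2 / 2 * Real.sin y := by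
    have hy_eq : Real.pi * y = Real.pi ^ 2 / 2 * (2 / Real.pi * y) := by field_simp
    rw [hy_eq]
    exact mul_le_mul_of_nonneg_left (Real.mul_le_sin hy hy') (by positivity)
  rw [Real.abs_sin_eq_sin_abs_of_abs_le_pi hx]
  rcases le_total |x| (Real.pi / 2) with hx' | hx'
  · nlinarith [jordan (abs_nonneg x) hx', abs_nonneg x]
  · have := jordan (sub_nonneg.2 hx) (by linarith)
    rw [Real.sin_pi_sub] at this
    nlinarith [abs_nonneg x]

variable {ρ : ℝ → ℝ} {L : NNReal}

section Lipschitz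

variable (hρ : LipschitzOnWith L ρ (Set.Icc (-Real.pi) Real.pi)) (hπ : ρ Real.pi = 0)
  (hπ' : ρ (-Real.pi) = 0)
include hρ hπ hπ'

theorem abs_le_mul_pi_sub_abs {x : ℝ} (hx : |x| ≤ Real.pi) : |ρ x| ≤ L * (Real.pi - |x|) := by
  have hpi := Real.pi_pos
  rcases le_total 0 x with h0 | h0
  · simpa [Real.dist_eq, hπ, abs_of_nonneg h0, abs_sub_comm x,
      abs_of_nonneg (sub_nonneg.2 (abs_le.1 hx).2)] using
      hρ.dist_le_mul x (abs_le.1 hx) Real.pi ⟨by linarith, le_rfl⟩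
  · have hx0 : 0 ≤ x + Real.pi := by linarith [(abs_le.1 hx).1]
    simpa [Real.dist_eq, hπ', abs_of_nonpos h0, abs_of_nonneg hx0, add_comm] using
      hρ.dist_le_mul x (abs_le.1 hx) (-Real.pi) ⟨le_rfl, by linarith⟩

theorem abs_mul_le_mul_abs_sin {x : ℝ} (hx : |x| ≤ Real.pi) :
    |x * ρ x| ≤ L * (Real.pi ^ 2 / 2) * |Real.sin x| := by
  calc |x * ρ x| = |x| * |ρ x| := abs_mul _ _
    _ ≤ |x| * (L * (Real.pi - |x|)) := by
      gcongr
      exact abs_le_mul_pi_sub_abs hρ hπ hπ' hx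
    _ = L * (|x| * (Real.pi - |x|)) := mul_left_comm _ _ _
    _ ≤ L * (Real.pi ^ 2 / 2 * |Real.sin x|) :=
      mul_le_mul_of_nonneg_left (abs_mul_pi_sub_abs_le hx) L.coe_nonneg
    _ = _ := (mul_assoc _ _ _).symm

end Lipschitz

theorem IsFilter.exists_lipschitzOnWith (hρ : IsFilter ρ) :
    ∃ L, LipschitzOnWith L ρ (Set.Icc (-Real.pi) Real.pi) := by
  obtain ⟨r, hr, hsmooth⟩ := hρ.smooth
  exact hsmooth.contDiffOn.exists_lipschitzOnWith (by exact_mod_cast (by lia : r ≠ 0))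
    (convex_Icc _ _) isCompact_Icc

variable {N : ℤ} (hN : 0 < N) (he : Even N)
include hN he

theorem l2norm_filterP_le {R : ℝ} (hR0 : 0 ≤ R) (hR : ∀ x, |x| ≤ Real.pi → |ρ x| ≤ R)
    (φ : ℤ → ℂ) : l2norm N (filterP N ρ φ) ≤ R * l2norm N φ := by
  refine l2norm_le_of_norm_dft_le hN he hR0 fun k hk => ?_
  rw [filterP, dft_idft hN he _ hk, norm_mul, Complex.norm_real]
  exact mul_le_mul_of_nonneg_right (hR _ (abs_gridPt_le hN hk)) (norm_nonneg _)

theorem l2norm_Dh_iterate_le {R : ℝ} (hR0 : 0 ≤ R)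
    (hR : ∀ x, |x| ≤ Real.pi → |x * ρ x| ≤ R * |Real.sin x|) {v : ℤ → ℂ}
    (hv : Function.Periodic v N) (m : ℕ) :
    l2norm N ((Dh N ρ)^[m] v) ≤ (R / (2 * hgrid N)) ^ m * l2norm N ((fwdDiff 2)^[m] v) := by
  have hh := hgrid_pos hN
  refine l2norm_le_of_norm_dft_le hN he (by positivity) fun k hk => ?_
  have hsymbol : ‖Complex.I * k * ρ (gridPt N k)‖ ≤
      R / (2 * hgrid N) * ‖gridChar N (k * 2) - 1‖ := by
    have h := hR _ (abs_gridPt_le hN hk)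
    rw [abs_mul, gridPt, abs_mul, abs_of_pos hh, ← gridPt] at h
    rw [norm_gridChar_mul_two_sub_one, norm_mul, norm_mul, Complex.norm_I, one_mul,
      Complex.norm_intCast, Complex.norm_real, Real.norm_eq_abs, div_mul_eq_mul_div,
      le_div_iff₀ (by positivity)]
    linarith
  rw [dft_Dh_iterate hN he ρ v m hk, dft_fwdDiff_iterate hN he hv 2 m hk, norm_mul, norm_mul,
    norm_pow, norm_pow, ← mul_assoc, ← mul_pow]
  gcongr

end FilteredDerivative

section GridOperator

/-- The alternating-point quadrature at the grid point `α_i` of the integral operator with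
kernel `Q : (α, β) ↦ Q (α, β)`. -/
def gridOp (N : ℤ) (Q : ℝ × ℝ → ℂ) (q : ℤ → ℂ) (i : ℤ) : ℂ :=
  ((hgrid N / Real.pi : ℝ) : ℂ) * ∑ j ∈ (idxs N).filter (fun j => Odd (j - i)),
    q j * Q (gridPt N i, gridPt N j)

theorem fwdDiff_iterate_gridOp (N : ℤ) (Q : ℝ × ℝ → ℂ) (q : ℤ → ℂ) (m : ℕ) :
    (fwdDiff 2)^[m] (gridOp N Q q) = gridOp N ((fwdDiff (gridPt N 2, 0))^[m] Q) q := by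
  have hsemiconj : Function.Semiconj (fun Q => gridOp N Q q) (fwdDiff (gridPt N 2, 0))
      (fwdDiff 2) := fun Q => by
    funext i
    have hparity (j : ℤ) : Odd (j - (i + 2)) ↔ Odd (j - i) := by grind
    simp only [gridOp, fwdDiff, hparity, gridPt_add, mul_sub, Finset.sum_sub_distrib,
      Prod.mk_add_mk, add_zero]
  exact (hsemiconj.iterate_right m Q).symm

theorem l2norm_gridOp_le {N : ℤ} (hN : 0 < N) (he : Even N) {Q : ℝ × ℝ → ℂ} {M : ℝ}
    (hM0 : 0 ≤ M) (hM : ∀ i ∈ idxs N, ∀ j ∈ idxs N, ‖Q (gridPt N i, gridPt N j)‖ ≤ M)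
    (q : ℤ → ℂ) : l2norm N (gridOp N Q q) ≤ 2 * M * l2norm N q := by
  have hh := hgrid_pos hN
  have hpi := Real.pi_pos
  have hcard : ((idxs N).card : ℝ) = N := by exact_mod_cast card_idxs hN he
  have hpoint : ∀ i ∈ idxs N,
      ‖gridOp N Q q i‖ ≤ hgrid N / Real.pi * (M * ∑ j ∈ idxs N, ‖q j‖) := fun i hi => by
    rw [gridOp, norm_mul, Complex.norm_real, Real.norm_of_nonneg (by positivity), Finset.mul_sum]
    gcongr
    refine (norm_sum_le _ _).trans ((Finset.sum_le_sum_of_subset_of_nonneg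
      (Finset.filter_subset _ _) fun _ _ _ => norm_nonneg _).trans
      (Finset.sum_le_sum fun j hj => ?_))
    rw [norm_mul, mul_comm]
    exact mul_le_mul_of_nonneg_right (hM i hi j hj) (norm_nonneg _)
  have hsum : ∑ i ∈ idxs N, ‖gridOp N Q q i‖ ^ 2 ≤ (2 * M) ^ 2 * ∑ j ∈ idxs N, ‖q j‖ ^ 2 := calc
    _ ≤ ∑ _i ∈ idxs N, (hgrid N / Real.pi * (M * ∑ j ∈ idxs N, ‖q j‖)) ^ 2 :=
      Finset.sum_le_sum fun i hi => pow_le_pow_left₀ (norm_nonneg _) (hpoint i hi) 2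
    _ = N * (hgrid N / Real.pi) ^ 2 * M ^ 2 * (∑ j ∈ idxs N, ‖q j‖) ^ 2 := by
      rw [Finset.sum_const, nsmul_eq_mul, hcard]
      ring
    _ ≤ N * (hgrid N / Real.pi) ^ 2 * M ^ 2 * (N * ∑ j ∈ idxs N, ‖q j‖ ^ 2) := by
      have : (0 : ℝ) ≤ N := Int.cast_nonneg hN.le
      gcongr
      exact hcard ▸ sq_sum_le_card_mul_sum_sq
    _ = (hgrid N * N / Real.pi * M) ^ 2 * ∑ j ∈ idxs N, ‖q j‖ ^ 2 := by ring
    _ = _ := by rw [hgrid_mul_self hN, mul_div_cancel_right₀ _ hpi.ne']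
  rw [l2norm, l2norm, ← Real.sqrt_sq (by positivity : 0 ≤ 2 * M), ← Real.sqrt_mul (sq_nonneg _),
    mul_left_comm]
  exact Real.sqrt_le_sqrt (mul_le_mul_of_nonneg_left hsum hh.le)

theorem exists_l2norm_fwdDiff_iterate_gridOp_le {m : ℕ} {Q : ℝ × ℝ → ℂ} (hQ : ContDiff ℝ m Q) :
    ∃ M : ℝ, 0 ≤ M ∧ ∀ N : ℤ, 0 < N → Even N → ∀ q : ℤ → ℂ,
      l2norm N ((fwdDiff 2)^[m] (gridOp N Q q)) ≤ M * (2 * hgrid N) ^ m * l2norm N q := by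
  obtain ⟨M, hM⟩ := (isCompact_closedBall (0 : ℝ × ℝ)
    (Real.pi + m * (2 * Real.pi))).exists_bound_of_continuousOn
    (hQ.continuous_iteratedFDeriv le_rfl).continuousOn
  have hM0 : 0 ≤ M :=
    (norm_nonneg _).trans (hM 0 (Metric.mem_closedBall_self (by positivity)))
  refine ⟨2 * M, by positivity, fun N hN he q => ?_⟩
  have hh := hgrid_pos hN
  have hv : ‖((gridPt N 2, 0) : ℝ × ℝ)‖ = 2 * hgrid N := by
    simp [gridPt, abs_of_pos hh, hh.le]
  have hv_le : 2 * hgrid N ≤ 2 * Real.pi := by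
    have hN2 : (2 : ℝ) ≤ N := by exact_mod_cast (by grind : 2 ≤ N)
    nlinarith [hgrid_mul_self hN]
  have hkernel : ∀ i ∈ idxs N, ∀ j ∈ idxs N,
      ‖(fwdDiff (gridPt N 2, 0))^[m] Q (gridPt N i, gridPt N j)‖ ≤ (2 * hgrid N) ^ m * M := by
    intro i hi j hj
    refine (norm_fwdDiff_iterate_le hQ (convex_closedBall _ _) hM fun l hl => ?_).trans_eq
      (by rw [hv])
    rw [mem_closedBall_zero_iff]
    refine (norm_add_le _ _).trans (add_le_add ?_ ?_)
    · exact norm_prod_le_iff.2 ⟨abs_gridPt_le hN hi, abs_gridPt_le hN hj⟩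
    · refine norm_nsmul_le.trans ?_
      rw [hv]
      gcongr
  rw [fwdDiff_iterate_gridOp]
  exact (l2norm_gridOp_le hN he (by positivity) hkernel q).trans_eq (by ring)

end GridOperator

section Remainder

theorem Lh_eq_neg_cotCoeff_mul_Hh_add_K3h (N : ℤ) (f τ : ℝ → ℂ) (q : ℤ → ℂ) (i : ℤ) :
    Lh N f τ q i = -cotCoeff f τ (gridPt N i) * Hh N q i + K3h N f τ q i := by
  rw [Lh, Hh, K3h, mul_left_comm, ← mul_add]
  congr 1
  rw [Finset.mul_sum, ← Finset.sum_add_distrib]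
  refine Finset.sum_congr rfl fun j _ => ?_
  rw [cotCoeff]
  ring

theorem K3h_apply (N : ℤ) (f τ : ℝ → ℂ) (q : ℤ → ℂ) (i : ℤ) :
    K3h N f τ q i = ((hgrid N / Real.pi : ℝ) : ℂ) * ∑ j ∈ (idxs N).filter (fun j => Odd (j - i)),
      q j * remainderKernel f τ (gridPt N i) (gridPt N j) := rfl

variable {f τ : ℝ → ℂ} (hτper : Function.Periodic τ (2 * Real.pi)) {N : ℤ} (hN : 0 < N)
  (he : Even N)
include hτper hN he

theorem K3h_eq_gridOp (q : ℤ → ℂ) : K3h N f τ q = gridOp N (smoothKernel f τ) q := by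
  funext i
  rw [K3h_apply, gridOp]
  congr 1
  refine Finset.sum_congr rfl fun j hj => ?_
  rw [smoothKernel_eq_remainderKernel hτper
    (sin_half_gridPt_sub_ne_zero hN he (Finset.mem_filter.1 hj).2)]

theorem periodic_K3h (hfper : Function.Periodic f (2 * Real.pi)) (q : ℤ → ℂ) :
    Function.Periodic (K3h N f τ q) N := fun i => by
  have hparity (j : ℤ) : Odd (j - (i + N)) ↔ Odd (j - i) := by grind
  have hkernel (α β : ℝ) : remainderKernel f τ (α + 2 * Real.pi) β = remainderKernel f τ α β :=
    periodic_remainderKernel_left hfper hτper β α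
  simp only [K3h_apply, hparity, gridPt_add, gridPt_self hN, hkernel]

end Remainder

section Estimates

variable {f τ : ℝ → ℂ} {m : ℕ} (hfper : Function.Periodic f (2 * Real.pi))
  (hτper : Function.Periodic τ (2 * Real.pi)) (hf : ContDiff ℝ (m + 1 : ℕ) f)
  (hτ : ContDiff ℝ (m + 2 : ℕ) τ) (hτ' : ∀ α : ℝ, deriv τ α ≠ 0)
  (hinj : ∀ α β : ℝ, (¬ ∃ n : ℤ, α - β = n * (2 * Real.pi)) → τ α ≠ τ β)
  {ρ : ℝ → ℝ} {L : NNReal} (hρ : LipschitzOnWith L ρ (Set.Icc (-Real.pi) Real.pi))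
  (hπ : ρ Real.pi = 0) (hπ' : ρ (-Real.pi) = 0)
include hfper hτper hf hτ hτ' hinj hρ hπ hπ'

theorem exists_l2norm_Dh_iterate_K3h_le :
    ∃ c : ℝ, 0 ≤ c ∧ ∀ N : ℤ, 0 < N → Even N → ∀ q : ℤ → ℂ,
      l2norm N ((Dh N ρ)^[m] (K3h N f τ q)) ≤ c * l2norm N q := by
  obtain ⟨M, hM0, hM⟩ := exists_l2norm_fwdDiff_iterate_gridOp_le
    (contDiff_smoothKernel hfper hτper hτ' hinj hf hτ)
  set R : ℝ := L * (Real.pi ^ 2 / 2)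
  have hR0 : 0 ≤ R := by positivity
  refine ⟨M * R ^ m, by positivity, fun N hN he q => ?_⟩
  have hh := hgrid_pos hN
  calc l2norm N ((Dh N ρ)^[m] (K3h N f τ q))
      ≤ (R / (2 * hgrid N)) ^ m * l2norm N ((fwdDiff 2)^[m] (K3h N f τ q)) :=
        l2norm_Dh_iterate_le hN he hR0 (fun _ => abs_mul_le_mul_abs_sin hρ hπ hπ')
          (periodic_K3h hτper hN he hfper q) m
    _ ≤ (R / (2 * hgrid N)) ^ m * (M * (2 * hgrid N) ^ m * l2norm N q) := by
        gcongr
        rw [K3h_eq_gridOp hτper hN he]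
        exact hM N hN he q
    _ = M * R ^ m * l2norm N q := by
        rw [div_pow]
        field_simp

theorem exists_forall_le_l2norm_Dh_iterate_K3h_le :
    ∃ c : ℝ, 0 ≤ c ∧ ∀ N : ℤ, 0 < N → Even N → ∀ q : ℤ → ℂ, ∀ k ≤ m,
      l2norm N ((Dh N ρ)^[k] (K3h N f τ q)) ≤ c * l2norm N q := by
  have horder (k : ℕ) : ∃ c : ℝ, 0 ≤ c ∧ (k ≤ m → ∀ N : ℤ, 0 < N → Even N → ∀ q : ℤ → ℂ,
      l2norm N ((Dh N ρ)^[k] (K3h N f τ q)) ≤ c * l2norm N q) := by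
    by_cases hk : k ≤ m
    · obtain ⟨c, hc0, hc⟩ := exists_l2norm_Dh_iterate_K3h_le (m := k) hfper hτper
        (hf.of_le (by exact_mod_cast (by lia : k + 1 ≤ m + 1)))
        (hτ.of_le (by exact_mod_cast (by lia : k + 2 ≤ m + 2))) hτ' hinj hρ hπ hπ'
      exact ⟨c, hc0, fun _ => hc⟩
    · exact ⟨0, le_rfl, fun h => absurd h hk⟩
  choose c hc0 hc using horder
  refine ⟨∑ k ∈ range (m + 1), c k, Finset.sum_nonneg fun k _ => hc0 k,
    fun N hN he q k hk => (hc k hk N hN he q).trans ?_⟩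
  exact mul_le_mul_of_nonneg_right (Finset.single_le_sum (fun k _ => hc0 k)
    (Finset.mem_range_succ_iff.2 hk)) (Real.sqrt_nonneg _)

end Estimates

theorem Lh_decomposition_general {f τ : ℝ → ℂ} {m : ℕ}
    (hfper : Function.Periodic f (2 * Real.pi)) (hτper : Function.Periodic τ (2 * Real.pi))
    (hf : ContDiff ℝ (m + 1 : ℕ) f) (hτ : ContDiff ℝ (m + 2 : ℕ) τ)
    (hτ' : ∀ α : ℝ, deriv τ α ≠ 0)
    (hinj : ∀ α β : ℝ, (¬ ∃ n : ℤ, α - β = n * (2 * Real.pi)) → τ α ≠ τ β)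
    {ρ : ℝ → ℝ} {L : NNReal} (hρ : LipschitzOnWith L ρ (Set.Icc (-Real.pi) Real.pi))
    (hπ : ρ Real.pi = 0) (hπ' : ρ (-Real.pi) = 0) :
    (∀ (N : ℤ) (q : ℤ → ℂ) (i : ℤ), Lh N f τ q i =
      -(f (gridPt N i) * deriv τ (gridPt N i) /
        (2 * (starRingEnd ℂ) (deriv τ (gridPt N i)) ^ 2)) * Hh N q i + K3h N f τ q i) ∧
    ∃ c : ℝ, 0 < c ∧ ∀ N : ℤ, 0 < N → Even N → ∀ φ : ℤ → ℂ, ∀ k ≤ m,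
      l2norm N ((Dh N ρ)^[k] (K3h N f τ φ)) ≤ c * l2norm N φ ∧
      l2norm N ((Dh N ρ)^[k] (K3h N f τ (filterP N ρ φ))) ≤ c * l2norm N φ := by
  obtain ⟨c, hc0, hc⟩ :=
    exists_forall_le_l2norm_Dh_iterate_K3h_le hfper hτper hf hτ hτ' hinj hρ hπ hπ'
  set R : ℝ := L * Real.pi
  have hR0 : 0 ≤ R := by positivity
  have hR (x : ℝ) (hx : |x| ≤ Real.pi) : |ρ x| ≤ R :=
    (abs_le_mul_pi_sub_abs hρ hπ hπ' hx).trans 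
      (mul_le_mul_of_nonneg_left (by linarith [abs_nonneg x]) L.coe_nonneg)
  refine ⟨fun N => Lh_eq_neg_cotCoeff_mul_Hh_add_K3h N f τ, c * (1 + R) + 1, by positivity,
    fun N hN he φ k hk => ?_⟩
  have hφ : 0 ≤ l2norm N φ := Real.sqrt_nonneg _
  have hfilter := l2norm_filterP_le hN he hR0 hR φ
  constructor
  · refine (hc N hN he φ k hk).trans (mul_le_mul_of_nonneg_right ?_ hφ)
    linarith [mul_nonneg hc0 hR0]
  · calc l2norm N ((Dh N ρ)^[k] (K3h N f τ (filterP N ρ φ)))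
        ≤ c * (R * l2norm N φ) := (hc N hN he _ k hk).trans (by gcongr)
      _ = c * R * l2norm N φ := (mul_assoc _ _ _).symm
      _ ≤ (c * (1 + R) + 1) * l2norm N φ := mul_le_mul_of_nonneg_right (by linarith) hφ

/-- Lemma 9.3: decomposition of `L_h` into a Hilbert-transform part
plus a smoothing remainder `K_{3h}`, with `K_{3h}(φ^p) = A_{-2}(φ)`. -/
theorem Lh_decomposition (f τ : ℝ → ℂ)
    (hfper : Function.Periodic f (2 * Real.pi)) (hτper : Function.Periodic τ (2 * Real.pi))
    (hf : ContDiff ℝ (⊤ : ℕ∞) f) (hτ : ContDiff ℝ (⊤ : ℕ∞) τ)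
    (hτ' : ∀ α : ℝ, deriv τ α ≠ 0)
    (hinj : ∀ α β : ℝ, (¬ ∃ n : ℤ, α - β = n * (2 * Real.pi)) → τ α ≠ τ β)
    (ρ : ℝ → ℝ) (hρ : IsFilter ρ) :
    (∀ N : ℤ, 2 ≤ N → Even N → ∀ q : ℤ → ℂ, ∀ i ∈ idxs N,
      Lh N f τ q i =
        -(f (gridPt N i) * deriv τ (gridPt N i) /
            (2 * (starRingEnd ℂ) (deriv τ (gridPt N i)) ^ 2)) * Hh N q i +
        K3h N f τ q i) ∧
    ∃ c : ℝ, 0 < c ∧ ∀ N : ℤ, 2 ≤ N → Even N → ∀ φ : ℤ → ℂ, ∀ k : ℕ, k ≤ 2 →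
      l2norm N ((Dh N ρ)^[k] (K3h N f τ (filterP N ρ φ))) ≤ c * l2norm N φ := by
  obtain ⟨L, hL⟩ := hρ.exists_lipschitzOnWith
  obtain ⟨hdecomp, c, hc, hbound⟩ := Lh_decomposition_general (m := 2) hfper hτper
    (contDiff_infty.1 hf 3) (contDiff_infty.1 hτ 4) hτ' hinj hL hρ.zero_at_pi hρ.zero_at_neg_pi
  exact ⟨fun N _ _ q i _ => hdecomp N q i, c, hc,
    fun N hN he φ k hk => (hbound N (two_pos.trans_le hN) he φ k hk).2⟩

end
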